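/- Fix a UE k and nonnegative reals L, and for m = 1,…,M, k' = 1,…,K nonnegative η_mk', γ_mk', β_mk, positive β_mk', numbers a_{kk'} ∈ {0,1}, E_d > 0, and κ_k ≥ 0 with κ_k ≤ ς_kk, where ς_kk' = Σ_{m=1}^M L η_mk' γ_mk' β_mk and P_{kk'} = Σ_{m=1}^M L √η_mk' γ_mk' β_mk/β_mk'. For every t ∈ [0,1], the downlink-training SINR dominates the statistical-CSI SINR: E_d t ( (Σ_m L √η_mk γ_mk)² + κ_k ) / ( E_d Σ_{k'≠k} ( ς_kk' + t P_{kk'}² a_{kk'} ) + E_d ( ς_kk − t κ_k ) + 1 ) ≥ E_d t (Σ_m L √η_mk γ_mk)² / ( E_d Σ_{k'≠k} ( ς_kk' + t P_{kk'}² a_{kk'} ) + E_d ς_kk + 1 ); in particular, for t = ρ_k[n]², SINR_k^{CF,DT}[n] ≥ SINR_k^{CF,sCSI}[n] for every symbol index n. -/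

import Mathlib

/-!
Downlink training adds the nonnegative term `Ed * t * κ` to the numerator of the
statistical-CSI SINR and removes the same nonnegative term from its denominator. The quotient
therefore grows as long as the reduced denominator stays positive, which holds because
`t * κ ≤ κ ≤ ∑ m, L * η m k * γ m k * β m k` and the interference from the other users is
nonnegative, so that this denominator is at least the noise power `1`.
-/

open Finset

theorem statement19 (M K : ℕ) (k : Fin K)
    (L : ℝ) (hL : 0 ≤ L)
    (η γ : Fin M → Fin K → ℝ) (hη : ∀ m k', 0 ≤ η m k') (hγ : ∀ m k', 0 ≤ γ m k')
    (β : Fin M → Fin K → ℝ) (hβk : ∀ m, 0 ≤ β m k) (hβpos : ∀ m k', 0 < β m k')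
    (a : Fin K → Fin K → ℝ) (ha : ∀ k' k'', a k' k'' = 0 ∨ a k' k'' = 1)
    (Ed : ℝ) (hEd : 0 < Ed)
    (κ : ℝ) (hκ0 : 0 ≤ κ) (hκ : κ ≤ ∑ m, L * η m k * γ m k * β m k) :
    ∀ t : ℝ, t ∈ Set.Icc (0 : ℝ) 1 →
      Ed * t * ((∑ m, L * Real.sqrt (η m k) * γ m k) ^ 2 + κ)
        / (Ed * (∑ k' ∈ Finset.univ.filter (· ≠ k),
              ((∑ m, L * η m k' * γ m k' * β m k)
                + t * (∑ m, L * Real.sqrt (η m k') * γ m k' * (β m k / β m k')) ^ 2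
                  * a k k'))
            + Ed * ((∑ m, L * η m k * γ m k * β m k) - t * κ)
            + 1)
      ≥ Ed * t * (∑ m, L * Real.sqrt (η m k) * γ m k) ^ 2
        / (Ed * (∑ k' ∈ Finset.univ.filter (· ≠ k),
              ((∑ m, L * η m k' * γ m k' * β m k)
                + t * (∑ m, L * Real.sqrt (η m k') * γ m k' * (β m k / β m k')) ^ 2
                  * a k k'))
            + Ed * (∑ m, L * η m k * γ m k * β m k)
            + 1) := by
  rintro t ⟨ht0, ht1⟩
  have hI : 0 ≤ ∑ k' ∈ Finset.univ.filter (· ≠ k),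
      ((∑ m, L * η m k' * γ m k' * β m k)
        + t * (∑ m, L * Real.sqrt (η m k') * γ m k' * (β m k / β m k')) ^ 2 * a k k') := by
    refine Finset.sum_nonneg fun k' _ => add_nonneg (Finset.sum_nonneg fun m _ => ?_) ?_
    · exact mul_nonneg (mul_nonneg (mul_nonneg hL (hη m k')) (hγ m k')) (hβk m)
    · have ha0 : 0 ≤ a k k' := by rcases ha k k' with h | h <;> simp [h]
      positivity
  have htκ : t * κ ≤ ∑ m, L * η m k * γ m k * β m k :=
    (mul_le_of_le_one_left hκ0 ht1).trans hκ
  have hres := mul_nonneg hEd.le (sub_nonneg.mpr htκ)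
  have hEI := mul_nonneg hEd.le hI
  refine div_le_div₀ (by positivity) ?_ (by linarith) ?_
  · gcongr
    exact le_add_of_nonneg_right hκ0
  · gcongr
    exact sub_le_self _ (mul_nonneg ht0 hκ0)
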